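/- For the barbell quiver with potential: (i) every band module M(v, λ, m) has its map f_c an isomorphism; (ii) a string module M(w) has its map f_c an isomorphism if and only if both the first and the last letter of the walk w belong to {c, c⁻¹}. -/

import Mathlib

/-!
# Statement 6

Work over `ℂ`.  The barbell quiver has vertices `1` and `2`, a loop `a` at vertex `1`, a
loop `b` at vertex `2`, and an arrow `c : 1 → 2`; its potential is `W = a³ + b³`, whose
Jacobian relations are `a² = 0` and `b² = 0`.

(i) every band module `M(v, λ, m)` has its map `f_c` an isomorphism;
(ii) a string module `M(w)` has its map `f_c` an isomorphism if and only if both the first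
and the last letter of the walk `w` belong to `{c, c⁻¹}`.

We encode vertex `1` as `false` and vertex `2` as `true`.  A walk is a nonempty list of
letters `a, b, c, a⁻¹, b⁻¹, c⁻¹` with consecutive letters composable, no letter immediately
followed by its own inverse, and no consecutive `aa`, `a⁻¹a⁻¹`, `bb`, `b⁻¹b⁻¹` (the last
two conditions say that neither `w` nor its inverse contains `aa` or `bb`).  The string
module `M(w)` of a walk of length `r` has basis vectors `z₀, …, z_r`, with `z_k` placed at
the vertex reached after the first `k` letters, and with `f_d z_{k-1} = z_k` when the
`k`-th letter is `d` and `f_d z_k = z_{k-1}` when the `k`-th letter is `d⁻¹` (all other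
basis vectors mapping to `0`); we realise it by matrices acting on the coordinate spaces
indexed by the vertex-`1` and vertex-`2` positions.  Band modules `M(v, λ, m)` are encoded
similarly, with copies of `ℂᵐ` indexed by `ℤ/r` and with the wrap-around letter acting by
the Jordan block `J_m(λ)`.

The theorem additionally records that the string and band modules satisfy the Jacobian
relations `f_a ∘ f_a = 0` and `f_b ∘ f_b = 0`, i.e. are genuine representations of the
barbell quiver with potential.
-/

noncomputable section

/-- The six letters `a, b, c, a⁻¹, b⁻¹, c⁻¹`. -/
inductive Letter | a | b | c | ai | bi | ci
deriving DecidableEq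

namespace Letter

/-- Formal inverse of a letter. -/
def inv : Letter → Letter
  | a => ai | ai => a | b => bi | bi => b | c => ci | ci => c

/-- Start vertex of a letter (`false` = vertex 1, `true` = vertex 2):
`a, a⁻¹` go from vertex `1` to `1`; `b, b⁻¹` from `2` to `2`; `c` from `1` to `2`;
`c⁻¹` from `2` to `1`. -/
def src : Letter → Bool
  | a => false | ai => false | b => true | bi => true | c => false | ci => true

/-- End vertex of a letter. -/
def tgt : Letter → Bool
  | a => false | ai => false | b => true | bi => true | c => true | ci => false

end Letter

/-- Two consecutive letters of a walk must be composable, the second must not be the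
inverse of the first, and the pair must not be `aa`, `a⁻¹a⁻¹`, `bb` or `b⁻¹b⁻¹`. -/
def okPair (x y : Letter) : Prop :=
  x.tgt = y.src ∧ y ≠ x.inv ∧ ¬(x = .a ∧ y = .a) ∧ ¬(x = .ai ∧ y = .ai) ∧
    ¬(x = .b ∧ y = .b) ∧ ¬(x = .bi ∧ y = .bi)

/-- A walk: a nonempty word in the letters, whose consecutive pairs are admissible. -/
def IsWalk (w : List Letter) : Prop := w ≠ [] ∧ w.Chain' okPair

/-- The vertex of the `k`-th vertex-instance of the walk `w` (for `0 ≤ k ≤ w.length`):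
the vertex reached after the first `k` letters.  For `k < w.length` this is the source of
the `k`-th letter (`0`-indexed); for `k = w.length` it is the target of the last letter. -/
def vertAt (w : List Letter) (k : ℕ) : Bool :=
  (w[k]?).elim (w.getLast?.elim false Letter.tgt) Letter.src

/-- A representation of the barbell quiver: vector spaces `V1, V2` and linear maps
`fa, fb, fc`.  (The Jacobian relations `fa ∘ fa = 0`, `fb ∘ fb = 0` are recorded in the
theorem below for the string and band modules.) -/
structure BRep where
  V1 : Type
  V2 : Type
  [acg1 : AddCommGroup V1]
  [acg2 : AddCommGroup V2]
  [mod1 : Module ℂ V1]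
  [mod2 : Module ℂ V2]
  fa : V1 →ₗ[ℂ] V1
  fb : V2 →ₗ[ℂ] V2
  fc : V1 →ₗ[ℂ] V2

attribute [instance] BRep.acg1 BRep.acg2 BRep.mod1 BRep.mod2

/-! ## String modules -/

/-- The entry of the matrix of `f_d` on the string module of `w`, in rows/columns indexed
by the positions `0, …, w.length`:  `f_d z_{k-1} = z_k` when the `k`-th letter of `w` is
`d` (contribution at row `j = i + 1`, column `i` with `w[i] = d`), and `f_d z_k = z_{k-1}`
when the `k`-th letter is `d⁻¹` (contribution at row `j`, column `i = j + 1` with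
`w[j] = d⁻¹`); all other entries vanish. -/
def strEntry (w : List Letter) (d : Letter) (j i : ℕ) : ℂ :=
  if (j = i + 1 ∧ w[i]? = some d) ∨ (i = j + 1 ∧ w[j]? = some d.inv) then 1 else 0

/-- Positions of the string module lying at vertex `1`. -/
abbrev SIdx1 (w : List Letter) := {k : Fin (w.length + 1) // vertAt w (k : ℕ) = false}

/-- Positions of the string module lying at vertex `2`. -/
abbrev SIdx2 (w : List Letter) := {k : Fin (w.length + 1) // vertAt w (k : ℕ) = true}

/-- The string module `M(w)` of a walk `w`. -/
def stringModule (w : List Letter) : BRep where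
  V1 := SIdx1 w → ℂ
  V2 := SIdx2 w → ℂ
  fa := Matrix.mulVecLin (fun j i : SIdx1 w => strEntry w .a (j.1 : ℕ) (i.1 : ℕ))
  fb := Matrix.mulVecLin (fun j i : SIdx2 w => strEntry w .b (j.1 : ℕ) (i.1 : ℕ))
  fc := Matrix.mulVecLin (fun (j : SIdx2 w) (i : SIdx1 w) => strEntry w .c (j.1 : ℕ) (i.1 : ℕ))

/-! ## Band modules -/

/-- A band: a walk whose endpoint equals its starting vertex, every power of which is again
a walk, and which is not a proper power of a shorter word. -/
def IsBand (v : List Letter) : Prop :=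
  IsWalk v ∧ vertAt v 0 = vertAt v v.length ∧
    (∀ n : ℕ, 0 < n → IsWalk (List.flatten (List.replicate n v))) ∧
    ¬ ∃ (u : List Letter) (m : ℕ), 2 ≤ m ∧ v = List.flatten (List.replicate m u)

/-- The `m × m` Jordan block with eigenvalue `λ`. -/
def jordan (lam : ℂ) {m : ℕ} (s t : Fin m) : ℂ :=
  if s = t then lam else if (s : ℕ) = (t : ℕ) + 1 then 1 else 0

/-- The entry of the matrix of `f_d` on the band module of `v` (copies of `ℂᵐ` indexed by
`ℤ/r`, `r = v.length`), in rows/columns indexed by pairs (position `< r`, coordinate in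
`Fin m`): the `k`-th letter `d` maps the `(k-1)`-st copy to the `k`-th copy by the identity
when `k < r` and by the Jordan block `J_m(λ)` when `k = r` (wrap-around), and dually for
`d⁻¹`. -/
def bandEntry (v : List Letter) (d : Letter) (lam : ℂ) {m : ℕ} (j i : ℕ) (s t : Fin m) : ℂ :=
  (if j = i + 1 ∧ v[i]? = some d then (if s = t then 1 else 0) else 0)
  + (if j = 0 ∧ i + 1 = v.length ∧ v[i]? = some d then jordan lam s t else 0)
  + (if i = j + 1 ∧ v[j]? = some d.inv then (if s = t then 1 else 0) else 0)
  + (if i = 0 ∧ j + 1 = v.length ∧ v[j]? = some d.inv then jordan lam s t else 0)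

/-- Copies of the band module lying at vertex `1`, with their `Fin m` coordinates. -/
abbrev BIdx1 (v : List Letter) (m : ℕ) :=
  {k : Fin v.length // vertAt v (k : ℕ) = false} × Fin m

/-- Copies of the band module lying at vertex `2`, with their `Fin m` coordinates. -/
abbrev BIdx2 (v : List Letter) (m : ℕ) :=
  {k : Fin v.length // vertAt v (k : ℕ) = true} × Fin m

/-- The band module `M(v, λ, m)`. -/
def bandModule (v : List Letter) (lam : ℂ) (m : ℕ) : BRep where
  V1 := BIdx1 v m → ℂ
  V2 := BIdx2 v m → ℂ
  fa := Matrix.mulVecLin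
    (fun p q : BIdx1 v m => bandEntry v .a lam (p.1.1 : ℕ) (q.1.1 : ℕ) p.2 q.2)
  fb := Matrix.mulVecLin
    (fun p q : BIdx2 v m => bandEntry v .b lam (p.1.1 : ℕ) (q.1.1 : ℕ) p.2 q.2)
  fc := Matrix.mulVecLin
    (fun (p : BIdx2 v m) (q : BIdx1 v m) => bandEntry v .c lam (p.1.1 : ℕ) (q.1.1 : ℕ) p.2 q.2)

namespace BB

theorem chain_ok {w : List Letter} (h : w.Chain' okPair) (k : ℕ) (x y : Letter)
    (hx : w[k]? = some x) (hy : w[k+1]? = some y) : okPair x y := by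
  have h' : w.IsChain okPair := h
  rw [List.isChain_iff_getElem] at h'
  obtain ⟨h1, rfl⟩ := List.getElem?_eq_some_iff.1 hx
  obtain ⟨h2, rfl⟩ := List.getElem?_eq_some_iff.1 hy
  exact h' k h2

theorem ok_one {x y : Letter} (h : okPair x y) (hy : y.src = false) : y = .c ∨ x = .ci := by
  cases x <;> cases y <;> simp_all [okPair, Letter.src, Letter.tgt, Letter.inv]

theorem ok_two {x y : Letter} (h : okPair x y) (hy : y.src = true) : y = .ci ∨ x = .c := by
  cases x <;> cases y <;> simp_all [okPair, Letter.src, Letter.tgt, Letter.inv]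

/-- the relation "the matrix entry of `f_d` at `(j, i)` may be nonzero" -/
def R (nx : ℕ → ℕ → Prop) (L : ℕ → Option Letter) (d : Letter) (j i : ℕ) : Prop :=
  (nx i j ∧ L i = some d) ∨ (nx j i ∧ L j = some d.inv)

structure Good (nx : ℕ → ℕ → Prop) (L : ℕ → Option Letter) : Prop where
  fn : ∀ i j j', nx i j → nx i j' → j = j'
  inj : ∀ i i' j, nx i j → nx i' j → i = i'
  ok : ∀ i j x y, nx i j → L i = some x → L j = some y → okPair x y

theorem Good.jac {nx L} (g : Good nx L) {d : Letter} (hd : d = .a ∨ d = .b) {j k i : ℕ}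
    (h1 : R nx L d j k) (h2 : R nx L d k i) : False := by
  rcases h1 with ⟨n1, l1⟩ | ⟨n1, l1⟩ <;> rcases h2 with ⟨n2, l2⟩ | ⟨n2, l2⟩
  · have := g.ok _ _ _ _ n2 l2 l1
    rcases hd with rfl | rfl <;> simp [okPair] at this
  · rw [l1] at l2
    rcases hd with rfl | rfl <;> simp [Letter.inv] at l2
  · have := g.inj _ _ _ n1 n2
    subst this
    rw [l1] at l2
    rcases hd with rfl | rfl <;> simp [Letter.inv] at l2
  · have := g.ok _ _ _ _ n1 l1 l2
    rcases hd with rfl | rfl <;> simp [okPair, Letter.inv] at this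

theorem Good.u1 {nx L} (g : Good nx L) {j i i' : ℕ}
    (h1 : R nx L .c j i) (h2 : R nx L .c j i') : i = i' := by
  rcases h1 with ⟨n1, l1⟩ | ⟨n1, l1⟩ <;> rcases h2 with ⟨n2, l2⟩ | ⟨n2, l2⟩
  · exact g.inj _ _ _ n1 n2
  · have := g.ok _ _ _ _ n1 l1 l2
    simp [okPair] at this
  · have := g.ok _ _ _ _ n2 l2 l1
    simp [okPair] at this
  · exact g.fn _ _ _ n1 n2

theorem Good.u2 {nx L} (g : Good nx L) {j j' i : ℕ}
    (h1 : R nx L .c j i) (h2 : R nx L .c j' i) : j = j' := by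
  rcases h1 with ⟨n1, l1⟩ | ⟨n1, l1⟩ <;> rcases h2 with ⟨n2, l2⟩ | ⟨n2, l2⟩
  · exact g.fn _ _ _ n1 n2
  · have := g.ok _ _ _ _ n2 l2 l1
    simp [okPair, Letter.inv] at this
  · have := g.ok _ _ _ _ n1 l1 l2
    simp [okPair, Letter.inv] at this
  · exact g.inj _ _ _ n1 n2

theorem comp_zero {P : Type} [Fintype P] (M : Matrix P P ℂ)
    (h : ∀ p k q, M p k * M k q = 0) : M.mulVecLin ∘ₗ M.mulVecLin = 0 := by
  have : M * M = 0 := by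
    ext p q
    rw [Matrix.mul_apply]
    exact Finset.sum_eq_zero fun k _ => h p k q
  rw [← Matrix.mulVecLin_mul, this, Matrix.mulVecLin_zero]

theorem bij_of {P Q : Type} [Fintype P] [Fintype Q] (M : Matrix P Q ℂ)
    (hc : Fintype.card P = Fintype.card Q) (h : ∀ x : Q → ℂ, M.mulVec x = 0 → x = 0) :
    Function.Bijective M.mulVecLin := by
  have hi : Function.Injective M.mulVecLin := by
    rw [← LinearMap.ker_eq_bot, LinearMap.ker_eq_bot']
    intro x hx
    exact h x hx
  refine ⟨hi, ?_⟩
  refine (LinearMap.injective_iff_surjective_of_finrank_eq_finrank ?_).1 hi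
  simp [hc]

theorem card_eq {I J : Type} [Fintype I] [Fintype J] (r : J → I → Prop)
    (h1 : ∀ i, ∃ j, r j i) (h2 : ∀ j, ∃ i, r j i)
    (u1 : ∀ j i i', r j i → r j i' → i = i') (u2 : ∀ j j' i, r j i → r j' i → j = j') :
    Fintype.card J = Fintype.card I := by
  choose f hf using h1
  choose g hg using h2
  apply le_antisymm
  · exact Fintype.card_le_of_injective g fun j j' e => u2 _ _ (g j) (hg j) (e ▸ hg j')
  · exact Fintype.card_le_of_injective f fun i i' e => u1 (f i) _ _ (hf i) (e ▸ hf i')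

theorem vert_src {w : List Letter} {k : ℕ} {x : Letter} (hx : w[k]? = some x) :
    vertAt w k = x.src := by
  simp [vertAt, hx]

theorem vert_tgt {w : List Letter} (h : w.Chain' okPair) {k : ℕ} {x : Letter}
    (hx : w[k]? = some x) : vertAt w (k+1) = x.tgt := by
  rcases hy : w[k+1]? with _ | y
  · have h1 := List.getElem?_eq_none_iff.1 hy
    obtain ⟨h2, h3⟩ := List.getElem?_eq_some_iff.1 hx
    have : w.getLast? = some x := by
      rw [List.getLast?_eq_getElem?, ← hx]
      congr 1
      omega
    simp [vertAt, hy, this]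
  · rw [vert_src hy]
    exact (chain_ok h k x y hx hy).1.symm

/-! ### strings -/

theorem str_good {w : List Letter} (h : w.Chain' okPair) :
    Good (fun i j => j = i + 1) (fun k => w[k]?) where
  fn := by intros; omega
  inj := by intros; omega
  ok := by
    rintro i j x y rfl hx hy
    exact chain_ok h i x y hx hy

theorem strEntry_eq (w : List Letter) (d : Letter) (j i : ℕ) [Decidable (R (fun i j => j = i + 1) (fun k => w[k]?) d j i)] :
    strEntry w d j i = if R (fun i j => j = i + 1) (fun k => w[k]?) d j i then 1 else 0 := by
  unfold strEntry R
  congr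

theorem str_jac {w : List Letter} (h : w.Chain' okPair) {d : Letter} (hd : d = .a ∨ d = .b)
    (j k i : ℕ) : strEntry w d j k * strEntry w d k i = 0 := by
  classical
  rw [strEntry_eq, strEntry_eq]
  have := (str_good h).jac hd (j := j) (k := k) (i := i)
  split_ifs <;> simp_all

theorem str_bij {w : List Letter} (hw : IsWalk w)
    (hh : w.head? = some .c ∨ w.head? = some .ci)
    (hl : w.getLast? = some .c ∨ w.getLast? = some .ci) :
    Function.Bijective (stringModule w).fc := by
  classical
  obtain ⟨hne, hch⟩ := hw
  have hpos : 0 < w.length := List.length_pos_iff.2 hne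
  rw [List.head?_eq_getElem?] at hh
  rw [List.getLast?_eq_getElem?] at hl
  have g := str_good hch
  let r : SIdx2 w → SIdx1 w → Prop := fun j i =>
    R (fun i j => j = i + 1) (fun k => w[k]?) .c (j.1 : ℕ) (i.1 : ℕ)
  have key : ∀ k, k ≤ w.length → 
      (vertAt w k = false → w[k]? = some .c ∨ (1 ≤ k ∧ w[k-1]? = some .ci)) ∧
      (vertAt w k = true → w[k]? = some .ci ∨ (1 ≤ k ∧ w[k-1]? = some .c)) := by
    intro k hk
    rcases Nat.eq_zero_or_pos k with rfl | hk0
    · rcases hh with hh | hh <;> simp [vert_src hh, hh, Letter.src]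
    rcases hk.eq_or_lt with rfl | hk1
    · have e : w.length = (w.length - 1) + 1 := by omega
      have : ∀ x, w[w.length - 1]? = some x → vertAt w w.length = x.tgt := by
        intro x hx
        rw [e]; exact vert_tgt hch hx
      rcases hl with hl | hl <;> simp [this _ hl, hl, Letter.tgt] <;> omega
    · have hx : w[k-1]? = some w[k-1] := List.getElem?_eq_getElem (by omega)
      have hy : w[k]? = some w[k] := List.getElem?_eq_getElem (by omega)
      have ok := g.ok (k-1) k _ _ (by omega) hx hy
      rw [vert_src hy, hx, hy]
      constructor
      · intro hs
        rcases ok_one ok hs with h | h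
        · exact Or.inl (by rw [h])
        · exact Or.inr ⟨hk0, by rw [h]⟩
      · intro hs
        rcases ok_two ok hs with h | h
        · exact Or.inl (by rw [h])
        · exact Or.inr ⟨hk0, by rw [h]⟩
  have e1 : ∀ i, ∃ j, r j i := by
    rintro ⟨⟨i, hi⟩, hv⟩
    rcases (key i (by omega)).1 hv with h | ⟨h0, h⟩
    · have hl := (List.getElem?_eq_some_iff.1 h).1
      exact ⟨⟨⟨i+1, by omega⟩, vert_tgt hch h⟩, Or.inl ⟨rfl, h⟩⟩
    · exact ⟨⟨⟨i-1, by omega⟩, vert_src h⟩, Or.inr ⟨by simp; omega, h⟩⟩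
  have e2 : ∀ j, ∃ i, r j i := by
    rintro ⟨⟨i, hi⟩, hv⟩
    rcases (key i (by omega)).2 hv with h | ⟨h0, h⟩
    · have hl := (List.getElem?_eq_some_iff.1 h).1
      exact ⟨⟨⟨i+1, by omega⟩, vert_tgt hch h⟩, Or.inr ⟨rfl, h⟩⟩
    · exact ⟨⟨⟨i-1, by omega⟩, vert_src h⟩, Or.inl ⟨by simp; omega, h⟩⟩
  have u1 : ∀ j i i', r j i → r j i' → i = i' := fun j i i' h h' =>
    Subtype.ext (Fin.ext (g.u1 h h'))
  have u2 : ∀ j j' i, r j i → r j' i → j = j' := fun j i i' h h' =>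
    Subtype.ext (Fin.ext (g.u2 h h'))
  refine bij_of (P := SIdx2 w) (Q := SIdx1 w)
    (fun j i => strEntry w .c (j.1 : ℕ) (i.1 : ℕ)) (card_eq r e1 e2 u1 u2) ?_
  intro x hx
  funext i
  obtain ⟨j, hj⟩ := e1 i
  have : ∑ i : SIdx1 w, strEntry w .c (j.1 : ℕ) (i.1 : ℕ) * x i = 0 := congrFun hx j
  rw [Finset.sum_eq_single i] at this
  · rw [strEntry_eq, if_pos hj, one_mul] at this
    exact this
  · intro i' _ hne
    rw [strEntry_eq, if_neg, zero_mul]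
    intro h
    exact hne (u1 j _ _ h hj)
  · simp

theorem not_bij_col {P Q : Type} [Fintype P] [Fintype Q] (M : Matrix P Q ℂ) (q : Q)
    (h : ∀ p, M p q = 0) : ¬ Function.Bijective M.mulVecLin := by
  classical
  intro hb
  have : M.mulVecLin (Pi.single q 1) = M.mulVecLin 0 := by
    rw [map_zero]
    funext p
    simp [h p]
  have := congrFun (hb.1 this) q
  simp at this

theorem not_bij_row {P Q : Type} [Fintype P] [Fintype Q] (M : Matrix P Q ℂ) (p : P)
    (h : ∀ q, M p q = 0) : ¬ Function.Bijective M.mulVecLin := by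
  classical
  intro hb
  obtain ⟨x, hx⟩ := hb.2 (Pi.single p 1)
  have := congrFun hx p
  simp [Matrix.mulVec, dotProduct, h] at this

theorem str_not_bij {w : List Letter} (k : ℕ) (hk : k ≤ w.length)
    (h1 : ∀ j, strEntry w .c j k = 0) (h2 : ∀ i, strEntry w .c k i = 0) :
    ¬ Function.Bijective (stringModule w).fc := by
  rcases hv : vertAt w k
  · exact not_bij_col (P := SIdx2 w) (Q := SIdx1 w) _ ⟨⟨k, by omega⟩, hv⟩ fun p => h1 _
  · exact not_bij_row (P := SIdx2 w) (Q := SIdx1 w) _ ⟨⟨k, by omega⟩, hv⟩ fun p => h2 _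

theorem str_iff {w : List Letter} (hw : IsWalk w) :
    Function.Bijective (stringModule w).fc ↔
        ((w.head? = some .c ∨ w.head? = some .ci) ∧
          (w.getLast? = some .c ∨ w.getLast? = some .ci)) := by
  have hpos : 0 < w.length := List.length_pos_iff.2 hw.1
  refine ⟨fun hb => ⟨?_, ?_⟩, fun h => str_bij hw h.1 h.2⟩
  · by_contra hcon
    push Not at hcon
    rw [List.head?_eq_getElem?] at hcon
    refine str_not_bij 0 (by omega) ?_ ?_ hb <;> intro i <;> unfold strEntry <;> rw [if_neg] <;>
      simp [Letter.inv, hcon] 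
  · by_contra hcon
    push Not at hcon
    rw [List.getLast?_eq_getElem?] at hcon
    refine str_not_bij w.length le_rfl ?_ ?_ hb <;> intro i <;> unfold strEntry <;> rw [if_neg] <;>
      rintro (⟨h, h'⟩ | ⟨h, h'⟩)
    · simp at h'
    · exact hcon.2 (by rw [h]; exact h')
    · exact hcon.1 (by rw [h]; exact h')
    · simp at h'

/-! ### bands -/

def bnx (r : ℕ) (i j : ℕ) : Prop := i < r ∧ j < r ∧ (j = i + 1 ∨ (j = 0 ∧ i + 1 = r))

theorem band_good {v : List Letter} (h : IsBand v) :
    Good (bnx v.length) (fun k => v[k]?) where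
  fn := by unfold bnx; intros; omega
  inj := by unfold bnx; intros; omega
  ok := by
    rintro i j x y ⟨hi, hj, h1 | ⟨rfl, h1⟩⟩ hx hy
    · subst h1
      exact chain_ok h.1.2 i x y hx hy
    · have h2 := (h.2.2.1 2 (by norm_num)).2
      have e : (List.replicate 2 v).flatten = v ++ v := by simp [List.replicate]
      rw [e] at h2
      refine chain_ok h2 i x y ?_ ?_
      · rw [List.getElem?_append_left hi]; exact hx
      · rw [List.getElem?_append_right (by omega), h1, Nat.sub_self]; exact hy

theorem bandEntry_zero {v : List Letter} {d : Letter} {lam : ℂ} {m : ℕ} {j i : ℕ} {s t : Fin m}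
    (hj : j < v.length) (hi : i < v.length)
    (h : ¬ R (bnx v.length) (fun k => v[k]?) d j i) : bandEntry v d lam j i s t = 0 := by
  unfold R bnx at h
  push Not at h
  obtain ⟨h1, h2⟩ := h
  unfold bandEntry
  rw [if_neg, if_neg, if_neg, if_neg]
  · simp
  · rintro ⟨a, b, c⟩; exact h2 ⟨hj, hi, Or.inr ⟨a, b⟩⟩ c
  · rintro ⟨a, c⟩; exact h2 ⟨hj, hi, Or.inl a⟩ c
  · rintro ⟨a, b, c⟩; exact h1 ⟨hi, hj, Or.inr ⟨a, b⟩⟩ c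
  · rintro ⟨a, c⟩; exact h1 ⟨hi, hj, Or.inl a⟩ c

theorem band_jac {v : List Letter} (h : IsBand v) {d : Letter} (hd : d = .a ∨ d = .b)
    {lam : ℂ} {m : ℕ} {j k i : ℕ} {s t u : Fin m}
    (hj : j < v.length) (hk : k < v.length) (hi : i < v.length) :
    bandEntry v d lam j k s t * bandEntry v d lam k i t u = 0 := by
  by_cases h1 : R (bnx v.length) (fun k => v[k]?) d j k
  · rw [bandEntry_zero (j := k) (i := i) hk hi, mul_zero]
    exact fun h2 => (band_good h).jac hd h1 h2
  · rw [bandEntry_zero hj hk h1, zero_mul]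

theorem bandEntry_block {v : List Letter} (h : IsBand v) {lam : ℂ} {m : ℕ} {j i : ℕ}
    (hr : R (bnx v.length) (fun k => v[k]?) .c j i) :
    (∀ s t : Fin m, bandEntry v .c lam j i s t = if s = t then 1 else 0) ∨
    (∀ s t : Fin m, bandEntry v .c lam j i s t = jordan lam s t) := by
  have g := band_good h
  have hx : ¬ ((bnx v.length i j ∧ v[i]? = some .c) ∧ (bnx v.length j i ∧ v[j]? = some (Letter.inv .c))) := by
    rintro ⟨⟨a, b⟩, c, d⟩
    have := g.ok _ _ _ _ a b d
    simp [okPair, Letter.inv] at this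
  unfold R at hr
  unfold bandEntry
  rcases hr with ⟨n, l⟩ | ⟨n, l⟩
  · have l' : ¬ (bnx v.length j i ∧ v[j]? = some (Letter.inv .c)) := fun q => hx ⟨⟨n, l⟩, q⟩
    obtain ⟨hi, hj, n⟩ := n
    have z3 : ¬ (i = j + 1 ∧ v[j]? = some (Letter.inv .c)) := fun q => l' ⟨⟨hj, hi, Or.inl q.1⟩, q.2⟩
    have z4 : ¬ (i = 0 ∧ j + 1 = v.length ∧ v[j]? = some (Letter.inv .c)) :=
      fun q => l' ⟨⟨hj, hi, Or.inr ⟨q.1, q.2.1⟩⟩, q.2.2⟩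
    simp only [if_neg z3, if_neg z4]
    rcases n with n | n
    · left; intro s t
      have p1 : j = i + 1 ∧ v[i]? = some .c := ⟨n, l⟩
      have p2 : ¬ (j = 0 ∧ i + 1 = v.length ∧ v[i]? = some .c) := by omega
      simp only [if_pos p1, if_neg p2]; simp
    · right; intro s t
      have p1 : ¬ (j = i + 1 ∧ v[i]? = some .c) := by omega
      have p2 : j = 0 ∧ i + 1 = v.length ∧ v[i]? = some .c := ⟨n.1, n.2, l⟩
      simp only [if_neg p1, if_pos p2]; simp
  · have l' : ¬ (bnx v.length i j ∧ v[i]? = some .c) := fun q => hx ⟨q, ⟨n, l⟩⟩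
    obtain ⟨hj, hi, n⟩ := n
    have z3 : ¬ (j = i + 1 ∧ v[i]? = some .c) := fun q => l' ⟨⟨hi, hj, Or.inl q.1⟩, q.2⟩
    have z4 : ¬ (j = 0 ∧ i + 1 = v.length ∧ v[i]? = some .c) :=
      fun q => l' ⟨⟨hi, hj, Or.inr ⟨q.1, q.2.1⟩⟩, q.2.2⟩
    simp only [if_neg z3, if_neg z4]
    rcases n with n | n
    · left; intro s t
      have p1 : i = j + 1 ∧ v[j]? = some (Letter.inv .c) := ⟨n, l⟩
      have p2 : ¬ (i = 0 ∧ j + 1 = v.length ∧ v[j]? = some (Letter.inv .c)) := by omega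
      simp only [if_pos p1, if_neg p2]; simp
    · right; intro s t
      have p1 : ¬ (i = j + 1 ∧ v[j]? = some (Letter.inv .c)) := by omega
      have p2 : i = 0 ∧ j + 1 = v.length ∧ v[j]? = some (Letter.inv .c) := ⟨n.1, n.2, l⟩
      simp only [if_neg p1, if_pos p2]; simp

theorem jordan_inj {lam : ℂ} (hl : lam ≠ 0) {m : ℕ} (x : Fin m → ℂ)
    (h : ∀ s, ∑ t, jordan lam s t * x t = 0) : x = 0 := by
  let J : Matrix (Fin m) (Fin m) ℂ := fun s t => jordan lam s t
  have hd : J.det ≠ 0 := by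
    have : J.BlockTriangular OrderDual.toDual := by
      intro s t hst
      have hst' : s < t := hst
      have : (s : ℕ) < t := hst'
      simp only [J, jordan]
      rw [if_neg hst'.ne, if_neg (by omega)]
    rw [Matrix.det_of_lowerTriangular J this]
    simp [J, jordan, hl]
  exact Matrix.eq_zero_of_mulVec_eq_zero hd (funext h)

theorem band_bij {v : List Letter} (hv : IsBand v) {lam : ℂ} (hl : lam ≠ 0) (m : ℕ) :
    Function.Bijective (bandModule v lam m).fc := by
  classical
  have g := band_good hv
  have hch := hv.1.2
  have hpos : 0 < v.length := List.length_pos_iff.2 hv.1.1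
  let I := {k : Fin v.length // vertAt v (k : ℕ) = false}
  let J := {k : Fin v.length // vertAt v (k : ℕ) = true}
  let r : J → I → Prop := fun j i => R (bnx v.length) (fun k => v[k]?) .c (j.1 : ℕ) (i.1 : ℕ)
  have tg : ∀ i j x, bnx v.length i j → v[i]? = some x → vertAt v j = x.tgt := by
    intro i j x n hx
    have hy : v[j]? = some (v[j]'n.2.1) := List.getElem?_eq_getElem n.2.1
    rw [vert_src hy]
    exact (g.ok _ _ _ _ n hx hy).1.symm
  have pred : ∀ k, k < v.length → ∃ p, bnx v.length p k := by
    intro k hk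
    rcases Nat.eq_zero_or_pos k with rfl | h0
    · exact ⟨v.length - 1, by unfold bnx; omega⟩
    · exact ⟨k - 1, by unfold bnx; omega⟩
  have succ : ∀ k, k < v.length → ∃ p, bnx v.length k p := by
    intro k hk
    by_cases h0 : k + 1 = v.length
    · exact ⟨0, by unfold bnx; omega⟩
    · exact ⟨k + 1, by unfold bnx; omega⟩
  have e1 : ∀ i, ∃ j, r j i := by
    rintro ⟨⟨i, hi⟩, hv⟩
    obtain ⟨p, hp⟩ := pred i hi
    obtain ⟨q, hq⟩ := succ i hi
    have hx : v[p]? = some (v[p]'hp.1) := List.getElem?_eq_getElem _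
    have hy : v[i]? = some (v[i]'hi) := List.getElem?_eq_getElem _
    have ok := g.ok _ _ _ _ hp hx hy
    have hv' : vertAt v i = false := hv
    rw [vert_src hy] at hv'
    rcases ok_one ok hv' with h | h
    · rw [h] at hy
      exact ⟨⟨⟨q, hq.2.1⟩, tg _ _ _ hq hy⟩, Or.inl ⟨hq, hy⟩⟩
    · rw [h] at hx
      exact ⟨⟨⟨p, hp.1⟩, vert_src hx⟩, Or.inr ⟨hp, hx⟩⟩
  have e2 : ∀ j, ∃ i, r j i := by
    rintro ⟨⟨i, hi⟩, hv⟩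
    obtain ⟨p, hp⟩ := pred i hi
    obtain ⟨q, hq⟩ := succ i hi
    have hx : v[p]? = some (v[p]'hp.1) := List.getElem?_eq_getElem _
    have hy : v[i]? = some (v[i]'hi) := List.getElem?_eq_getElem _
    have ok := g.ok _ _ _ _ hp hx hy
    have hv' : vertAt v i = true := hv
    rw [vert_src hy] at hv'
    rcases ok_two ok hv' with h | h
    · rw [h] at hy
      exact ⟨⟨⟨q, hq.2.1⟩, tg _ _ _ hq hy⟩, Or.inr ⟨hq, hy⟩⟩
    · rw [h] at hx
      exact ⟨⟨⟨p, hp.1⟩, vert_src hx⟩, Or.inl ⟨hp, hx⟩⟩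
  have u1 : ∀ j i i', r j i → r j i' → i = i' := fun j i i' h h' =>
    Subtype.ext (Fin.ext (g.u1 h h'))
  have u2 : ∀ j j' i, r j i → r j' i → j = j' := fun j i i' h h' =>
    Subtype.ext (Fin.ext (g.u2 h h'))
  refine bij_of (P := J × Fin m) (Q := I × Fin m)
    (fun p q => bandEntry v .c lam (p.1.1 : ℕ) (q.1.1 : ℕ) p.2 q.2) ?_ ?_
  · rw [Fintype.card_prod, Fintype.card_prod, card_eq r e1 e2 u1 u2]
  intro x hx
  have main : ∀ i, (fun t => x (i, t)) = 0 := by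
    intro i
    obtain ⟨j, hj⟩ := e1 i
    have hs : ∀ s, ∑ t, bandEntry v .c lam (j.1 : ℕ) (i.1 : ℕ) s t * x (i, t) = 0 := by
      intro s
      have : ∑ q : I × Fin m, bandEntry v .c lam (j.1 : ℕ) (q.1.1 : ℕ) s q.2 * x q = 0 :=
        congrFun hx (j, s)
      rw [Fintype.sum_prod_type, Finset.sum_eq_single i] at this
      · exact this
      · intro i' _ hne
        refine Finset.sum_eq_zero fun t _ => ?_
        show bandEntry v .c lam (j.1 : ℕ) (i'.1 : ℕ) s t * _ = 0
        rw [bandEntry_zero j.1.2 i'.1.2, zero_mul]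
        intro h
        exact hne (u1 j _ _ h hj)
      · simp
    rcases bandEntry_block (lam := lam) (m := m) hv hj with hb | hb
    · funext s
      have := hs s
      simp only [hb] at this
      simpa using this
    · simp only [hb] at hs
      exact jordan_inj hl _ hs
  funext ⟨i, t⟩
  exact congrFun (main i) t

end BB

/-- (i) Every band module `M(v, λ, m)` (with `λ ≠ 0`, `m ≥ 1`) has its
map `f_c` an isomorphism.  (ii) A string module `M(w)` has its map `f_c` an isomorphism if
and only if both the first and the last letter of the walk `w` belong to `{c, c⁻¹}`.
(In both cases the module moreover satisfies the Jacobian relations.) -/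
theorem band_fc_iso_and_string_fc_iso_iff :
    (∀ v : List Letter, IsBand v → ∀ lam : ℂ, lam ≠ 0 → ∀ m : ℕ, 1 ≤ m →
      ((bandModule v lam m).fa ∘ₗ (bandModule v lam m).fa = 0 ∧
        (bandModule v lam m).fb ∘ₗ (bandModule v lam m).fb = 0) ∧
      Function.Bijective (bandModule v lam m).fc) ∧
    (∀ w : List Letter, IsWalk w →
      ((stringModule w).fa ∘ₗ (stringModule w).fa = 0 ∧
        (stringModule w).fb ∘ₗ (stringModule w).fb = 0) ∧
      (Function.Bijective (stringModule w).fc ↔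
        ((w.head? = some .c ∨ w.head? = some .ci) ∧
          (w.getLast? = some .c ∨ w.getLast? = some .ci)))) := by
  refine ⟨fun v hv lam hl m _ => ⟨⟨?_, ?_⟩, BB.band_bij hv hl m⟩,
    fun w hw => ⟨⟨?_, ?_⟩, BB.str_iff hw⟩⟩
  · exact BB.comp_zero (P := BIdx1 v m) _ fun p k q =>
      BB.band_jac hv (Or.inl rfl) p.1.1.2 k.1.1.2 q.1.1.2
  · exact BB.comp_zero (P := BIdx2 v m) _ fun p k q =>
      BB.band_jac hv (Or.inr rfl) p.1.1.2 k.1.1.2 q.1.1.2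
  · exact BB.comp_zero (P := SIdx1 w) _ fun p k q => BB.str_jac hw.2 (Or.inl rfl) _ _ _
  · exact BB.comp_zero (P := SIdx2 w) _ fun p k q => BB.str_jac hw.2 (Or.inr rfl) _ _ _
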